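/- arXiv:0705.2404 — 3 statements merged into one kernel-verified Lean document; each statement's English description precedes it below -/
import Mathlib

section
/- For every position G of the octal game 4.7 (including the empty position), G is a misère P-position if and only if Φ(G) ∈ P. -/
/-- One legal move in the octal game 4.7: split a heap into two nonempty heaps
removing no beans; or remove 1 bean, either removing the whole heap, leaving
one nonempty heap, or splitting the remainder into two nonempty heaps.
Positions are finite multisets of heap sizes. -/
def Move47 (G G' : Multiset ℕ) : Prop :=
  (∃ k ∈ G, ∃ i j : ℕ, 1 ≤ i ∧ 1 ≤ j ∧ i + j = k ∧ G' = i ::ₘ j ::ₘ G.erase k) ∨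
  (1 ∈ G ∧ G' = G.erase 1) ∨
  (∃ k ∈ G, 2 ≤ k ∧ G' = (k - 1) ::ₘ G.erase k) ∨
  (∃ k ∈ G, 3 ≤ k ∧ ∃ i j : ℕ, 1 ≤ i ∧ 1 ≤ j ∧ i + j = k - 1 ∧
    G' = i ::ₘ j ::ₘ G.erase k)

/-- Generators of the misère quotient of 4.7: `a`, `b`, `c`, and `d n`. -/
inductive Gen47 where
  | a : Gen47
  | b : Gen47
  | c : Gen47
  | d : ℕ → Gen47

/-- The free commutative monoid on the generators, written multiplicatively. -/
abbrev FM47 := Multiplicative (Multiset Gen47)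

/-- The generator `x` as an element of the free commutative monoid. -/
def fgen47 (x : Gen47) : FM47 := Multiplicative.ofAdd {x}

def fa : FM47 := fgen47 .a
def fb : FM47 := fgen47 .b
def fc : FM47 := fgen47 .c
def fd (n : ℕ) : FM47 := fgen47 (.d n)

/-- The defining relations of the quotient `Q` for 4.7:
`a² = 1`, `bc = ab³`, `c² = b⁴`, `b^(n+1) d_n = a^(n+1) b^(2n+5)`,
`c d_n = a b² d_n`, and `d_m d_n = a^(m+1) b^(m+4) d_n` for `m ≤ n`. -/
def rel47 : FM47 → FM47 → Prop := fun x y =>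
  (x = fa ^ 2 ∧ y = 1) ∨
  (x = fb * fc ∧ y = fa * fb ^ 3) ∨
  (x = fc ^ 2 ∧ y = fb ^ 4) ∨
  (∃ n : ℕ, x = fb ^ (n + 1) * fd n ∧ y = fa ^ (n + 1) * fb ^ (2 * n + 5)) ∨
  (∃ n : ℕ, x = fc * fd n ∧ y = fa * fb ^ 2 * fd n) ∨
  (∃ m n : ℕ, m ≤ n ∧ x = fd m * fd n ∧ y = fa ^ (m + 1) * fb ^ (m + 4) * fd n)

/-- The commutative monoid `Q` presented by generators `a`, `b`, `c`, `d_n`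
and the relations `rel47`. -/
def Q47 : Type := (conGen rel47).Quotient

instance : CommMonoid Q47 := Con.commMonoid _

/-- The image of `a` in `Q`. -/
def qa : Q47 := (conGen rel47).mk' fa
/-- The image of `b` in `Q`. -/
def qb : Q47 := (conGen rel47).mk' fb
/-- The image of `c` in `Q`. -/
def qc : Q47 := (conGen rel47).mk' fc
/-- The image of `d_n` in `Q`. -/
def qd (n : ℕ) : Q47 := (conGen rel47).mk' (fd n)

/-- The P-portion `P = {a} ∪ {b^(2m) : m ≥ 1} ∪ {b^m d_n : m odd, n even, m < n}
∪ {a b^m d_n : m even, n odd, m < n}`. -/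
def P47 : Set Q47 :=
  {x | x = qa} ∪
  {x | ∃ m : ℕ, 1 ≤ m ∧ x = qb ^ (2 * m)} ∪
  {x | ∃ m n : ℕ, m % 2 = 1 ∧ n % 2 = 0 ∧ m < n ∧ x = qb ^ m * qd n} ∪
  {x | ∃ m n : ℕ, m % 2 = 0 ∧ n % 2 = 1 ∧ m < n ∧ x = qa * qb ^ m * qd n}

/-- The pretending function on single heaps for 4.7. -/
def phi47 (k : ℕ) : Q47 :=
  if k = 1 ∨ k = 3 then qa
  else if k = 2 ∨ k = 4 then qb
  else if k = 5 then qc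
  else if k = 6 then qb ^ 3
  else qd (k - 7)

/-- The pretending function extended multiplicatively to positions. -/
def Phi47 (G : Multiset ℕ) : Q47 := (G.map phi47).prod

/-!
Inverting `b` in `Q` turns `c` into `a b²` and `d_n` into `a^(n+1) b^(n+4)`, so an element of `Q`
is described by a weight (its exponent of `b`), a parity (its exponent of `a`) and a level that
tells whether a factor `c` or `d_n` has been absorbed by powers of `b`. Membership in `P` depends
only on these three numbers.

A move never joins two elements of `P`. Every heap has odd weight plus parity, so weight plus
parity of a position counts its heaps modulo two; elements of `P` other than `a` have even sum,
which rules out a move that changes the number of heaps, except in a few positions of weight zero.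
Reducing a heap by one flips the parity and changes the weight by one; it cannot lead from weight
below level to weight equal to level, or back, between two elements of `P`, because a level above
the weight is odd.

Conversely, every nonterminal position outside `P` has an option in `P`. The largest heap bounds
the level of the whole position, and the residues modulo two of weight and parity dictate the
reply there; only two families of positions need a move in a smaller heap.
-/

namespace Octal47

/-! ### Signatures -/

/-- Numerical invariant of an element of `Q`. In the localization of `Q` at `b` we have
`c = a b²` and `d_n = a^(n+1) b^(n+4)`, so every element becomes `a^parity b^weight`. The `level`
remembers the part lost there: powers of `b` have level equal to weight, `c` has level `3`, `d_n`
has level `2n+5`, and an element fails to be a product of powers of `a` and `b` exactly when its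
weight is smaller than its level. The remaining fields are constraints that all elements of `Q`
satisfy. -/
@[ext]
structure Signature where
  weight : ℕ
  parity : ℕ
  level : ℕ
  parity_lt_two : parity < 2 := by omega
  weight_le_level : weight ≤ level := by omega
  level_le_two_mul_weight : level ≤ 2 * weight := by omega
  level_odd_of_weight_lt : weight < level → level % 2 = 1 := by omega

namespace Signature

instance : One Signature := ⟨{ weight := 0, parity := 0, level := 0 }⟩

instance : Mul Signature where
  mul x y :=
    { weight := x.weight + y.weight
      parity := (x.parity + y.parity) % 2
      level := max (x.weight + y.weight) (max x.level y.level)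
      level_le_two_mul_weight := by
        have := x.level_le_two_mul_weight
        have := y.level_le_two_mul_weight
        omega
      level_odd_of_weight_lt := by
        have := x.level_odd_of_weight_lt
        have := y.level_odd_of_weight_lt
        omega }

@[simp] lemma one_weight : (1 : Signature).weight = 0 := rfl
@[simp] lemma one_parity : (1 : Signature).parity = 0 := rfl
@[simp] lemma one_level : (1 : Signature).level = 0 := rfl

@[simp] lemma mul_weight (x y : Signature) : (x * y).weight = x.weight + y.weight := rfl
@[simp] lemma mul_parity (x y : Signature) : (x * y).parity = (x.parity + y.parity) % 2 := rfl
@[simp] lemma mul_level (x y : Signature) :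
    (x * y).level = max (x.weight + y.weight) (max x.level y.level) := rfl

instance : CommMonoid Signature where
  mul_assoc x y z := by
    ext <;> simp only [mul_weight, mul_parity, mul_level] <;> omega
  one_mul x := by
    have := x.parity_lt_two
    have := x.weight_le_level
    ext <;> simp only [mul_weight, mul_parity, mul_level, one_weight, one_parity, one_level] <;>
      omega
  mul_one x := by
    have := x.parity_lt_two
    have := x.weight_le_level
    ext <;> simp only [mul_weight, mul_parity, mul_level, one_weight, one_parity, one_level] <;>
      omega
  mul_comm x y := by
    ext <;> simp only [mul_weight, mul_parity, mul_level] <;> omega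

/-- The signatures of the elements of the P-portion. -/
def IsP (x : Signature) : Prop :=
  (x.weight < x.level ∧ x.parity = 1 ∧ x.weight % 2 = 1) ∨
  (x.weight = x.level ∧
    (x.parity = 1 ∧ x.weight = 0 ∨ x.parity = 0 ∧ x.weight % 2 = 0 ∧ 0 < x.weight))

end Signature

open Signature

/-- Signatures of the generators of `Q`. -/
def genSignature : Gen47 → Signature
  | .a => { weight := 0, parity := 1, level := 0 }
  | .b => { weight := 1, parity := 0, level := 1 }
  | .c => { weight := 2, parity := 1, level := 3 }
  | .d n => { weight := n + 4, parity := (n + 1) % 2, level := 2 * n + 5 }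

/-- The extension of a map on generators to the free commutative monoid, as a homomorphism. -/
def wordEval {M : Type*} [CommMonoid M] (f : Gen47 → M) : FM47 →* M where
  toFun x := (x.toAdd.map f).prod
  map_one' := by simp
  map_mul' x y := by simp

@[simp] lemma wordEval_fgen47 {M : Type*} [CommMonoid M] (f : Gen47 → M) (g : Gen47) :
    wordEval f (fgen47 g) = f g :=
  Multiset.prod_singleton (f g)

lemma genSignature_a_pow_mul_b_pow (e m : ℕ) :
    genSignature .a ^ e * genSignature .b ^ m =
      { weight := m, parity := e % 2, level := m } := by
  have ha : genSignature .a ^ e = { weight := 0, parity := e % 2, level := 0 } := by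
    induction e with
    | zero => rfl
    | succ e ih => rw [pow_succ, ih]; ext <;> simp [genSignature]
  have hb : genSignature .b ^ m = { weight := m, parity := 0, level := m } := by
    induction m with
    | zero => rfl
    | succ m ih => rw [pow_succ, ih]; ext <;> simp [genSignature]
  rw [ha, hb]
  ext <;> simp

lemma conGen_rel47_le_ker : conGen rel47 ≤ Con.ker (wordEval genSignature) := by
  have hab := genSignature_a_pow_mul_b_pow
  have hb (m : ℕ) : genSignature .b ^ m = { weight := m, parity := 0, level := m } := by
    simpa using hab 0 m
  rw [Con.conGen_le]
  rintro x y (⟨rfl, rfl⟩ | ⟨rfl, rfl⟩ | ⟨rfl, rfl⟩ | ⟨n, rfl, rfl⟩ | ⟨n, rfl, rfl⟩ |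
    ⟨m, n, hmn, rfl, rfl⟩) <;>
  simp only [Con.ker_rel, fa, fb, fc, fd, map_mul, map_pow, map_one, wordEval_fgen47]
  · rfl
  · rw [hb]; rfl
  · rw [hb]; rfl
  · rw [hab, hb]
    ext <;> simp only [mul_weight, mul_parity, mul_level, genSignature] <;> omega
  · rw [hb]
    ext <;> simp only [mul_weight, mul_parity, mul_level, genSignature]
    omega
  · rw [hab]
    ext <;> simp only [mul_weight, mul_parity, mul_level, genSignature]
    omega

/-- The signature of an element of `Q`, as a homomorphism. -/
noncomputable def signature : Q47 →* Signature :=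
  (conGen rel47).lift (wordEval genSignature) conGen_rel47_le_ker

@[simp] lemma signature_qa : signature qa = genSignature .a := wordEval_fgen47 _ _
@[simp] lemma signature_qb : signature qb = genSignature .b := wordEval_fgen47 _ _
@[simp] lemma signature_qc : signature qc = genSignature .c := wordEval_fgen47 _ _
@[simp] lemma signature_qd (n : ℕ) : signature (qd n) = genSignature (.d n) := wordEval_fgen47 _ _

lemma mk_eq_mk_of_rel47 {x y : FM47} (h : rel47 x y) :
    (conGen rel47).mk' x = (conGen rel47).mk' y :=
  (Con.eq _).2 (.of x y h)

lemma qa_sq : qa ^ 2 = 1 := mk_eq_mk_of_rel47 (.inl ⟨rfl, rfl⟩)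

lemma qb_mul_qc : qb * qc = qa * qb ^ 3 := mk_eq_mk_of_rel47 (.inr <| .inl ⟨rfl, rfl⟩)

lemma qc_sq : qc ^ 2 = qb ^ 4 := mk_eq_mk_of_rel47 (.inr <| .inr <| .inl ⟨rfl, rfl⟩)

lemma qb_pow_mul_qd (n : ℕ) : qb ^ (n + 1) * qd n = qa ^ (n + 1) * qb ^ (2 * n + 5) :=
  mk_eq_mk_of_rel47 (.inr <| .inr <| .inr <| .inl ⟨n, rfl, rfl⟩)

lemma qc_mul_qd (n : ℕ) : qc * qd n = qa * qb ^ 2 * qd n :=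
  mk_eq_mk_of_rel47 (.inr <| .inr <| .inr <| .inr <| .inl ⟨n, rfl, rfl⟩)

lemma qd_mul_qd {m n : ℕ} (h : m ≤ n) :
    qd m * qd n = qa ^ (m + 1) * qb ^ (m + 4) * qd n :=
  mk_eq_mk_of_rel47 (.inr <| .inr <| .inr <| .inr <| .inr ⟨m, n, h, rfl, rfl⟩)

/-! ### Normal forms in `Q` -/

/-- Normal forms of elements of `Q`: `a^e b^m`, `a^e c`, and `a^e b^m d_n` with `m ≤ n`. -/
inductive IsNormal : Q47 → Prop
  | b (e m : ℕ) : IsNormal (qa ^ e * qb ^ m)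
  | c (e : ℕ) : IsNormal (qa ^ e * qc)
  | d (e m n : ℕ) (h : m ≤ n) : IsNormal (qa ^ e * qb ^ m * qd n)

namespace IsNormal

lemma qa_pow_mul_qb_pow_mul_qd (e m n : ℕ) : IsNormal (qa ^ e * qb ^ m * qd n) := by
  rcases le_or_gt m n with h | h
  · exact .d e m n h
  · obtain ⟨k, rfl⟩ := Nat.exists_eq_add_of_lt h
    have absorb : qa ^ e * qb ^ (n + k + 1) * qd n =
        qa ^ (e + (n + 1)) * qb ^ (k + (2 * n + 5)) := by
      rw [show n + k + 1 = k + (n + 1) by ring, pow_add qb k, pow_add qa e, pow_add qb k]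
      grind [qb_pow_mul_qd n]
    rw [absorb]
    exact .b _ _

lemma qa_mul {q : Q47} (hq : IsNormal q) : IsNormal (qa * q) := by
  cases hq with
  | b e m => simpa only [pow_succ', mul_assoc] using b (e + 1) m
  | c e => simpa only [pow_succ', mul_assoc] using c (e + 1)
  | d e m n h => simpa only [pow_succ', mul_assoc] using d (e + 1) m n h

lemma qb_mul {q : Q47} (hq : IsNormal q) : IsNormal (qb * q) := by
  cases hq with
  | b e m =>
    rw [show qb * (qa ^ e * qb ^ m) = qa ^ e * qb ^ (m + 1) by grind [pow_succ]]
    exact .b _ _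
  | c e =>
    rw [show qb * (qa ^ e * qc) = qa ^ (e + 1) * qb ^ 3 by grind [pow_succ, qb_mul_qc]]
    exact .b _ _
  | d e m n =>
    rw [show qb * (qa ^ e * qb ^ m * qd n) = qa ^ e * qb ^ (m + 1) * qd n by grind [pow_succ]]
    exact qa_pow_mul_qb_pow_mul_qd _ _ _

lemma qc_mul {q : Q47} (hq : IsNormal q) : IsNormal (qc * q) := by
  cases hq with
  | b e m =>
    cases m with
    | zero =>
      rw [show qc * (qa ^ e * qb ^ 0) = qa ^ e * qc by rw [pow_zero, mul_one, mul_comm]]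
      exact .c e
    | succ m =>
      rw [show qc * (qa ^ e * qb ^ (m + 1)) = qa ^ (e + 1) * qb ^ (m + 3) by
        rw [pow_succ qa, pow_succ qb, pow_add qb]
        grind [qb_mul_qc]]
      exact .b _ _
  | c e =>
    rw [show qc * (qa ^ e * qc) = qa ^ e * qb ^ 4 by grind [pow_two qc, qc_sq]]
    exact .b _ _
  | d e m n =>
    rw [show qc * (qa ^ e * qb ^ m * qd n) = qa ^ (e + 1) * qb ^ (m + 2) * qd n by
      grind [pow_succ, pow_add qb m 2, qc_mul_qd n]]
    exact qa_pow_mul_qb_pow_mul_qd _ _ _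

lemma qd_mul (k : ℕ) {q : Q47} (hq : IsNormal q) : IsNormal (qd k * q) := by
  cases hq with
  | b e m =>
    rw [mul_comm]
    exact qa_pow_mul_qb_pow_mul_qd e m k
  | c e =>
    rw [show qd k * (qa ^ e * qc) = qa ^ (e + 1) * qb ^ 2 * qd k by
      grind [pow_succ, qc_mul_qd k]]
    exact qa_pow_mul_qb_pow_mul_qd _ _ _
  | d e m n =>
    rcases le_total k n with hkn | hnk
    · rw [show qd k * (qa ^ e * qb ^ m * qd n) =
          qa ^ (e + (k + 1)) * qb ^ (m + (k + 4)) * qd n by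
        rw [pow_add qa e, pow_add qb m]
        grind [qd_mul_qd hkn]]
      exact qa_pow_mul_qb_pow_mul_qd _ _ _
    · rw [show qd k * (qa ^ e * qb ^ m * qd n) =
          qa ^ (e + (n + 1)) * qb ^ (m + (n + 4)) * qd k by
        rw [pow_add qa e, pow_add qb m]
        grind [qd_mul_qd hnk]]
      exact qa_pow_mul_qb_pow_mul_qd _ _ _

end IsNormal

lemma induction_mul_generator {p : Q47 → Prop} (one : p 1) (qa_mul : ∀ q, p q → p (qa * q))
    (qb_mul : ∀ q, p q → p (qb * q)) (qc_mul : ∀ q, p q → p (qc * q))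
    (qd_mul : ∀ n q, p q → p (qd n * q)) (q : Q47) : p q := by
  induction q using Con.induction_on with
  | _ w =>
  induction w using Multiset.induction with
  | empty => exact one
  | cons g w ih =>
    rw [← Multiset.singleton_add]
    cases g with
    | a => exact qa_mul _ ih
    | b => exact qb_mul _ ih
    | c => exact qc_mul _ ih
    | d n => exact qd_mul n _ ih

lemma isNormal (q : Q47) : IsNormal q := by
  induction q using induction_mul_generator with
  | one => simpa only [pow_zero, one_mul] using IsNormal.b 0 0
  | qa_mul q hq => exact hq.qa_mul
  | qb_mul q hq => exact hq.qb_mul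
  | qc_mul q hq => exact hq.qc_mul
  | qd_mul n q hq => exact hq.qd_mul n

lemma qa_pow_mod_two (e : ℕ) : qa ^ (e % 2) = qa ^ e := (pow_eq_pow_mod e qa_sq).symm

lemma signature_qa_pow_mul_qb_pow (e m : ℕ) :
    signature (qa ^ e * qb ^ m) = { weight := m, parity := e % 2, level := m } := by
  simp only [map_mul, map_pow, signature_qa, signature_qb, genSignature_a_pow_mul_b_pow]

lemma signature_qa_pow_mul_qc (e : ℕ) :
    signature (qa ^ e * qc) = { weight := 2, parity := (e + 1) % 2, level := 3 } := by
  rw [← mul_one (qa ^ e), ← pow_zero qb, map_mul, signature_qa_pow_mul_qb_pow, signature_qc]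
  ext <;> simp [genSignature]

lemma signature_qa_pow_mul_qb_pow_mul_qd {m n : ℕ} (e : ℕ) (h : m ≤ n) :
    signature (qa ^ e * qb ^ m * qd n) =
      { weight := m + n + 4, parity := (e + n + 1) % 2, level := 2 * n + 5 } := by
  rw [map_mul, signature_qa_pow_mul_qb_pow, signature_qd]
  ext <;> simp [genSignature] <;> omega

lemma isP_signature_of_mem_P47 {q : Q47} (hq : q ∈ P47) : (signature q).IsP := by
  rcases hq with ((rfl | ⟨m, hm, rfl⟩) | ⟨m, n, hm, hn, hmn, rfl⟩) | ⟨m, n, hm, hn, hmn, rfl⟩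
  · simp [genSignature, IsP]
  · have := signature_qa_pow_mul_qb_pow 0 (2 * m)
    rw [pow_zero, one_mul] at this
    simp only [this, IsP, true_and]
    omega
  · have := signature_qa_pow_mul_qb_pow_mul_qd 0 hmn.le
    rw [pow_zero, one_mul] at this
    simp only [this, IsP]
    omega
  · have := signature_qa_pow_mul_qb_pow_mul_qd 1 hmn.le
    rw [pow_one] at this
    simp only [this, IsP]
    omega

lemma IsNormal.mem_P47 {q : Q47} (hq : IsNormal q) (hP : (signature q).IsP) : q ∈ P47 := by
  cases hq with
  | b e m =>
    rw [signature_qa_pow_mul_qb_pow] at hP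
    simp only [IsP] at hP
    obtain ⟨he, rfl⟩ | ⟨he, hm, hpos⟩ : e % 2 = 1 ∧ m = 0 ∨ e % 2 = 0 ∧ m % 2 = 0 ∧ 0 < m := by
      omega
    · refine .inl (.inl (.inl ?_))
      simp [← qa_pow_mod_two e, he]
    · refine .inl (.inl (.inr ⟨m / 2, by omega, ?_⟩))
      rw [← qa_pow_mod_two, he, pow_zero, one_mul, Nat.mul_div_cancel' (Nat.dvd_of_mod_eq_zero hm)]
  | c e =>
    rw [signature_qa_pow_mul_qc] at hP
    simp only [IsP] at hP
    omega
  | d e m n hmn =>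
    rw [signature_qa_pow_mul_qb_pow_mul_qd e hmn] at hP
    simp only [IsP] at hP
    obtain ⟨he, hm, hn, hlt⟩ | ⟨he, hm, hn, hlt⟩ :
        e % 2 = 0 ∧ m % 2 = 1 ∧ n % 2 = 0 ∧ m < n ∨ e % 2 = 1 ∧ m % 2 = 0 ∧ n % 2 = 1 ∧ m < n := by
      omega
    · refine .inl (.inr ⟨m, n, hm, hn, hlt, ?_⟩)
      rw [← qa_pow_mod_two, he, pow_zero, one_mul]
    · refine .inr ⟨m, n, hm, hn, hlt, ?_⟩
      rw [← qa_pow_mod_two, he, pow_one]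

theorem mem_P47_iff_isP_signature {q : Q47} : q ∈ P47 ↔ (signature q).IsP :=
  ⟨isP_signature_of_mem_P47, (isNormal q).mem_P47⟩

/-! ### Kernels of misère games -/

section Kernel

variable {α : Type*} {Move : α → α → Prop} {PP F : α → Prop}

theorem misereP_iff_of_kernel (wf : WellFounded (flip Move))
    (hPP : ∀ x, PP x ↔ (∃ y, Move x y) ∧ ∀ y, Move x y → ¬ PP y)
    (not_terminal : ∀ x, F x → ∃ y, Move x y)
    (independent : ∀ x y, Move x y → F x → ¬ F y)
    (absorbing : ∀ x y, Move x y → ¬ F x → ∃ z, Move x z ∧ F z) (x : α) : PP x ↔ F x := by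
  induction x using wf.induction with
  | _ x ih =>
  rw [hPP]
  constructor
  · rintro ⟨⟨y, hxy⟩, no_P_option⟩
    by_contra hF
    obtain ⟨z, hxz, hFz⟩ := absorbing x y hxy hF
    exact no_P_option z hxz ((ih z hxz).2 hFz)
  · exact fun hF => ⟨not_terminal x hF, fun y hxy hP => independent x y hxy hF ((ih y hxy).1 hP)⟩

end Kernel

/-! ### Positions and their signatures -/

/-- `HeapOption k O`: a single heap of size `k` can be moved to the position `O`. -/
inductive HeapOption : ℕ → Multiset ℕ → Prop
  | remove : HeapOption 1 0
  | shrink {k : ℕ} (hk : 1 ≤ k) : HeapOption (k + 1) {k}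
  | split {k i j : ℕ} (hi : 1 ≤ i) (hj : 1 ≤ j) (hk : i + j = k ∨ i + j + 1 = k) :
      HeapOption k {i, j}

lemma move47_iff {G G' : Multiset ℕ} :
    Move47 G G' ↔ ∃ k R O, G = k ::ₘ R ∧ HeapOption k O ∧ G' = O + R := by
  constructor
  · rintro (⟨k, hk, i, j, hi, hj, hij, rfl⟩ | ⟨hk, rfl⟩ | ⟨k, hk, h2, rfl⟩ |
      ⟨k, hk, h3, i, j, hi, hj, hij, rfl⟩)
    · exact ⟨k, _, _, (Multiset.cons_erase hk).symm, .split hi hj (.inl hij), by simp⟩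
    · exact ⟨1, _, _, (Multiset.cons_erase hk).symm, .remove, (zero_add _).symm⟩
    · obtain ⟨k, rfl⟩ := Nat.exists_eq_add_of_le' (one_le_two.trans h2)
      exact ⟨_, _, _, (Multiset.cons_erase hk).symm, .shrink (by omega), rfl⟩
    · exact ⟨k, _, _, (Multiset.cons_erase hk).symm, .split hi hj (.inr (by omega)), by simp⟩
  · rintro ⟨k, R, _, rfl, _ | @⟨k, hk⟩ | @⟨k, i, j, hi, hj, hij | hij⟩, rfl⟩
    · exact .inr (.inl ⟨Multiset.mem_cons_self _ _, by simp⟩)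
    · exact .inr (.inr (.inl ⟨k + 1, Multiset.mem_cons_self _ _, by omega, by simp⟩))
    · exact .inl ⟨k, Multiset.mem_cons_self _ _, i, j, hi, hj, hij, by simp⟩
    · exact .inr (.inr (.inr ⟨k, Multiset.mem_cons_self _ _, by omega, i, j, hi, hj, by omega,
        by simp⟩))

lemma HeapOption.move47 {k : ℕ} {O : Multiset ℕ} (h : HeapOption k O) (R : Multiset ℕ) :
    Move47 (k ::ₘ R) (O + R) :=
  move47_iff.2 ⟨k, R, O, rfl, h, rfl⟩

lemma wellFounded_flip_move47 : WellFounded (flip Move47) := by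
  -- Splitting without removing a bean still lowers this sum, since `(2i-1) + (2j-1) = 2(i+j) - 2`.
  let size (G : Multiset ℕ) : ℕ := (G.map fun k => 2 * k - 1).sum
  refine Subrelation.wf (fun {G' G} h => ?_) (measure size).wf
  obtain ⟨k, R, O, rfl, hO, rfl⟩ := move47_iff.1 h
  have size_option : size O < 2 * k - 1 := by
    cases hO <;> simp [size] <;> omega
  change size (O + R) < size (k ::ₘ R)
  simpa [size] using size_option

/-- Signature of a single heap. An empty heap, which has no options, gets the trivial signature. -/
def heapSignature : ℕ → Signature
  | 0 => 1
  | 1 => { weight := 0, parity := 1, level := 0 }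
  | 2 => { weight := 1, parity := 0, level := 1 }
  | 3 => { weight := 0, parity := 1, level := 0 }
  | 4 => { weight := 1, parity := 0, level := 1 }
  | 5 => { weight := 2, parity := 1, level := 3 }
  | k + 6 => { weight := k + 3, parity := k % 2, level := 2 * k + 3 }

lemma heapSignature_parity (k : ℕ) : (heapSignature k).parity = k % 2 := by
  match k with
  | 0 | 1 | 2 | 3 | 4 | 5 => rfl
  | k + 6 => simp only [heapSignature]; omega

lemma heapSignature_weight_level (k : ℕ) :
    k = 2 ∧ (heapSignature k).weight = 1 ∧ (heapSignature k).level = 1 ∨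
    (k ≤ 4 ∧ k ≠ 2) ∧ (heapSignature k).weight = k - 3 ∧ (heapSignature k).level = k - 3 ∨
    5 ≤ k ∧ (heapSignature k).weight = k - 3 ∧ (heapSignature k).level = max 3 (2 * k - 9) := by
  match k with
  | 0 | 1 | 2 | 3 | 4 | 5 => simp [heapSignature]
  | k + 6 => simp only [heapSignature]; omega

/-- Signature of a position, the product of the signatures of its heaps. -/
def positionSignature (G : Multiset ℕ) : Signature := (G.map heapSignature).prod

@[simp] lemma positionSignature_zero : positionSignature 0 = 1 := rfl

@[simp] lemma positionSignature_cons (k : ℕ) (R : Multiset ℕ) :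
    positionSignature (k ::ₘ R) = heapSignature k * positionSignature R := by
  simp [positionSignature]

@[simp] lemma positionSignature_add (G H : Multiset ℕ) :
    positionSignature (G + H) = positionSignature G * positionSignature H := by
  simp [positionSignature]

@[simp] lemma positionSignature_singleton (k : ℕ) :
    positionSignature {k} = heapSignature k := by
  simp [positionSignature]

@[simp] lemma positionSignature_pair (i j : ℕ) :
    positionSignature {i, j} = heapSignature i * heapSignature j := by
  simp [positionSignature]

lemma signature_phi47 {k : ℕ} (hk : 1 ≤ k) : signature (phi47 k) = heapSignature k := by
  match k, hk with
  | 1, _ | 2, _ | 3, _ | 4, _ | 5, _ => simp [phi47, genSignature, heapSignature]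
  | 6, _ => simpa [phi47, heapSignature] using signature_qa_pow_mul_qb_pow 0 3
  | k + 7, _ =>
    rw [phi47, if_neg (by omega), if_neg (by omega), if_neg (by omega), if_neg (by omega),
      signature_qd]
    ext <;> simp only [genSignature, heapSignature] <;> omega

lemma signature_Phi47 {G : Multiset ℕ} (hpos : ∀ k ∈ G, 1 ≤ k) :
    signature (Phi47 G) = positionSignature G := by
  rw [Phi47, map_multiset_prod, Multiset.map_map, positionSignature]
  exact congrArg _ (Multiset.map_congr rfl fun k hk => signature_phi47 (hpos k hk))

/-! ### No move joins two P-signatures -/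

variable {x : Signature}

lemma not_isP_of_shrink {k : ℕ} (h : (heapSignature (k + 1) * x).IsP) :
    ¬ (heapSignature k * x).IsP := by
  have := (heapSignature (k + 1) * x).level_odd_of_weight_lt
  have := (heapSignature k * x).level_odd_of_weight_lt
  have := heapSignature_weight_level k
  have := heapSignature_weight_level (k + 1)
  simp only [IsP, mul_weight, mul_parity, mul_level, heapSignature_parity] at *
  omega

lemma Signature.IsP.weight_eq_zero_or_even (hx : x.IsP) :
    x.weight = 0 ∨ (x.weight + x.parity) % 2 = 0 := by
  unfold IsP at hx
  omega

lemma heapSignature_weight_add_parity_odd {k : ℕ} (hk : 1 ≤ k) :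
    ((heapSignature k).weight + (heapSignature k).parity) % 2 = 1 := by
  have := heapSignature_weight_level k
  rw [heapSignature_parity]
  omega

lemma heapSignature_weight_eq_zero_iff {k : ℕ} (hk : 1 ≤ k) :
    (heapSignature k).weight = 0 ↔ k = 1 ∨ k = 3 := by
  have := heapSignature_weight_level k
  omega

lemma not_isP_of_split {k i j : ℕ} (hi : 1 ≤ i) (hj : 1 ≤ j)
    (hk : i + j = k ∨ i + j + 1 = k) (h : (heapSignature k * x).IsP) :
    ¬ (heapSignature i * heapSignature j * x).IsP := by
  intro h'
  have hk₁ : 1 ≤ k := by omega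
  obtain hw | hw : (heapSignature k * x).weight = 0 ∨
      (heapSignature i * heapSignature j * x).weight = 0 := by
    have := h.weight_eq_zero_or_even
    have := h'.weight_eq_zero_or_even
    have := heapSignature_weight_add_parity_odd hk₁
    have := heapSignature_weight_add_parity_odd hi
    have := heapSignature_weight_add_parity_odd hj
    simp only [mul_weight, mul_parity] at *
    omega
  all_goals
    simp only [mul_weight, Nat.add_eq_zero_iff, heapSignature_weight_eq_zero_iff, hi, hj,
      hk₁] at hw
    have hx : x.level = 0 := by
      have := x.level_le_two_mul_weight
      omega
    simp only [IsP, mul_weight, mul_parity, mul_level, hw, hx] at h h'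
  · obtain rfl : k = 3 := by omega
    obtain ⟨rfl, rfl⟩ | ⟨rfl, rfl⟩ | ⟨rfl, rfl⟩ :
        i = 1 ∧ j = 1 ∨ i = 1 ∧ j = 2 ∨ i = 2 ∧ j = 1 := by omega
    all_goals
      simp only [heapSignature] at h h'
      omega
  · rcases hw with ⟨⟨rfl | rfl, rfl | rfl⟩, -⟩ <;> rcases hk with rfl | rfl <;>
      simp only [heapSignature] at h h' <;> omega

lemma not_isP_positionSignature_of_move47 {G G' : Multiset ℕ} (h : Move47 G G')
    (hG : (positionSignature G).IsP) : ¬ (positionSignature G').IsP := by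
  obtain ⟨k, R, O, rfl, hO, rfl⟩ := move47_iff.1 h
  rw [positionSignature_cons] at hG
  rw [positionSignature_add]
  cases hO with
  | remove => exact not_isP_of_shrink (k := 0) hG
  | shrink => simpa using not_isP_of_shrink hG
  | split hi hj hk => simpa using not_isP_of_split hi hj hk hG

lemma HeapOption.exists_of_one_le {k : ℕ} (hk : 1 ≤ k) : ∃ O, HeapOption k O := by
  match k, hk with
  | 1, _ => exact ⟨_, .remove⟩
  | k + 2, _ => exact ⟨_, .shrink (Nat.succ_pos k)⟩

lemma exists_move47_of_isP {G : Multiset ℕ} (hG : (positionSignature G).IsP) :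
    ∃ G', Move47 G G' := by
  by_cases hpos : ∃ k ∈ G, 1 ≤ k
  · obtain ⟨k, hk, hk₁⟩ := hpos
    obtain ⟨R, rfl⟩ := Multiset.exists_cons_of_mem hk
    obtain ⟨O, hO⟩ := HeapOption.exists_of_one_le hk₁
    exact ⟨_, hO.move47 R⟩
  · have hone : positionSignature G = 1 := by
      refine Multiset.prod_eq_one fun x hx => ?_
      obtain ⟨k, hk, rfl⟩ := Multiset.mem_map.1 hx
      obtain rfl : k = 0 := by by_contra h; exact hpos ⟨k, hk, by omega⟩
      rfl
    simp [hone, IsP] at hG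

/-! ### Winning replies at the largest heap -/

lemma positionSignature_level_le {M : ℕ} {R : Multiset ℕ} (hR : ∀ g ∈ R, g ≤ M) :
    (positionSignature R).level ≤ max (positionSignature R).weight (heapSignature M).level := by
  induction R using Multiset.induction with
  | empty => simp
  | cons g R ih =>
    have := ih fun k hk => hR k (Multiset.mem_cons_of_mem hk)
    have := hR g (Multiset.mem_cons_self g R)
    have := heapSignature_weight_level g
    have := heapSignature_weight_level M
    simp only [positionSignature_cons, mul_level, mul_weight]
    omega

lemma heapSignature_mul_heapSignature_of_balanced {i j : ℕ} (hi : 3 ≤ i) (hij : i ≤ j)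
    (hji : j ≤ i + 1) :
    heapSignature i * heapSignature j =
      { weight := i + j - 6, parity := (i + j) % 2, level := i + j - 6 } := by
  have := heapSignature_weight_level i
  have := heapSignature_weight_level j
  ext <;> simp only [mul_weight, mul_parity, mul_level, heapSignature_parity] <;> omega

lemma heapSignature_two_mul_heapSignature_add_four (k : ℕ) :
    heapSignature 2 * heapSignature (k + 4) =
      { weight := k + 2, parity := k % 2, level := max (k + 2) (2 * k - 1) } := by
  have := heapSignature_weight_level 2
  have := heapSignature_weight_level (k + 4)
  ext <;> simp only [mul_weight, mul_parity, mul_level, heapSignature_parity] <;> omega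

/-- A heap `M` lying next to a position of signature `x` has an option that makes the whole
signature P. -/
def HasPOption (M : ℕ) (x : Signature) : Prop :=
  ∃ O, HeapOption M O ∧ (positionSignature O * x).IsP

namespace HasPOption

lemma of_remove (h : x.IsP) : HasPOption 1 x := ⟨0, .remove, by simpa using h⟩

lemma of_shrink {k : ℕ} (h : (heapSignature k * x).IsP) (hk : 1 ≤ k := by omega) :
    HasPOption (k + 1) x :=
  ⟨_, .shrink hk, by rwa [positionSignature_singleton]⟩

lemma of_split {k : ℕ} (i j : ℕ) (h : (heapSignature i * heapSignature j * x).IsP)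
    (hi : 1 ≤ i := by omega) (hj : 1 ≤ j := by omega)
    (hk : i + j = k ∨ i + j + 1 = k := by omega) : HasPOption k x :=
  ⟨_, .split hi hj hk, by rwa [positionSignature_pair]⟩

end HasPOption

lemma hasPOption_add_seven_of_lt_weight {k : ℕ}
    (hlevel : x.level ≤ max x.weight (heapSignature (k + 7)).level)
    (hk : k < x.weight) (hN : ¬ (heapSignature (k + 7) * x).IsP) : HasPOption (k + 7) x := by
  have hlevel' : x.level ≤ x.weight + k + 2 := by
    have := x.level_le_two_mul_weight
    simp only [heapSignature] at hlevel
    omega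
  obtain ⟨p, w⟩ | ⟨p, w⟩ | ⟨p, w⟩ :
      (k + x.parity) % 2 = 1 ∧ (k + x.weight) % 2 = 1 ∨
      (k + x.parity) % 2 = 0 ∧ (k + x.weight) % 2 = 0 ∨
      (k + x.parity) % 2 = 0 ∧ (k + x.weight) % 2 = 1 := by
    simp only [IsP, mul_weight, mul_parity, mul_level, heapSignature] at hN
    omega
  · refine .of_split 1 (k + 6) ?_
    simp only [IsP, mul_weight, mul_parity, mul_level, heapSignature]
    omega
  · refine .of_split 2 (k + 4) ?_
    rw [heapSignature_two_mul_heapSignature_add_four]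
    simp only [IsP, mul_weight, mul_parity, mul_level]
    omega
  · refine .of_shrink ?_
    simp only [IsP, mul_weight, mul_parity, mul_level, heapSignature]
    omega

lemma hasPOption_add_seven_of_weight_le {k : ℕ}
    (hlevel : x.level ≤ max x.weight (heapSignature (k + 7)).level)
    (hk : x.weight ≤ k) (hN : ¬ (heapSignature (k + 7) * x).IsP)
    (htight : 0 < k → x.weight = k → (k + x.parity) % 2 = 0) : HasPOption (k + 7) x := by
  have hlevel' : x.level ≤ x.weight + k := by
    have := x.level_le_two_mul_weight
    simp only [heapSignature] at hlevel
    omega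
  obtain ⟨p, w⟩ | ⟨p, w⟩ | ⟨p, w⟩ :
      (k + x.parity) % 2 = 1 ∧ (k + x.weight) % 2 = 0 ∨
      (k + x.parity) % 2 = 1 ∧ (k + x.weight) % 2 = 1 ∨
      (k + x.parity) % 2 = 0 ∧ (k + x.weight) % 2 = 0 := by
    simp only [IsP, mul_weight, mul_parity, mul_level, heapSignature] at hN
    omega
  · obtain rfl | hlt : k = 0 ∨ x.weight < k := by omega
    · refine .of_split 3 3 ?_
      simp only [IsP, mul_weight, mul_parity, mul_level, heapSignature]
      omega
    · refine .of_shrink ?_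
      simp only [IsP, mul_weight, mul_parity, mul_level, heapSignature]
      omega
  · refine .of_split ((k + 7) / 2) (k + 7 - (k + 7) / 2) ?_
    rw [heapSignature_mul_heapSignature_of_balanced (by omega) (by omega) (by omega)]
    simp only [IsP, mul_weight, mul_parity, mul_level]
    omega
  · rcases hk.eq_or_lt with heq | hlt
    · refine .of_split 2 (k + 4) ?_
      rw [heapSignature_two_mul_heapSignature_add_four]
      simp only [IsP, mul_weight, mul_parity, mul_level]
      omega
    · refine .of_split 1 (k + 6) ?_
      simp only [IsP, mul_weight, mul_parity, mul_level, heapSignature]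
      omega

lemma hasPOption_one (hx : x.weight = 0) (hN : ¬ (heapSignature 1 * x).IsP) : HasPOption 1 x := by
  have := x.level_le_two_mul_weight
  have := x.parity_lt_two
  refine .of_remove ?_
  simp only [IsP, mul_weight, mul_parity, mul_level, heapSignature] at hN ⊢
  omega

lemma hasPOption_two (hlevel : x.level = x.weight) (hx : x.parity = 0 ∨ x.weight % 2 = 0)
    (hN : ¬ (heapSignature 2 * x).IsP) : HasPOption 2 x := by
  have := x.parity_lt_two
  obtain h | h : (x.parity = 0 ↔ x.weight = 0) ∨ (x.parity = 1 ↔ x.weight = 0) := by omega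
  on_goal 1 => refine .of_shrink ?_
  on_goal 2 => refine .of_split 1 1 ?_
  all_goals
    simp only [IsP, mul_weight, mul_parity, mul_level, heapSignature] at hN ⊢
    omega

lemma hasPOption_three (hlevel : x.level = x.weight) (hN : ¬ (heapSignature 3 * x).IsP) :
    HasPOption 3 x := by
  have := x.parity_lt_two
  obtain h | h | h : x.weight % 2 = 0 ∨ x.weight % 2 = 1 ∧ x.parity = 0 ∨
      x.weight % 2 = 1 ∧ x.parity = 1 := by omega
  on_goal 1 => refine .of_split 1 1 ?_
  on_goal 2 => refine .of_shrink ?_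
  on_goal 3 => refine .of_split 1 2 ?_
  all_goals
    simp only [IsP, mul_weight, mul_parity, mul_level, heapSignature] at hN ⊢
    omega

lemma hasPOption_four (hlevel : x.level = x.weight) (hN : ¬ (heapSignature 4 * x).IsP) :
    HasPOption 4 x := by
  have := x.parity_lt_two
  obtain h | h | h : x.weight % 2 = 1 ∧ x.parity = 1 ∨
      (x.weight % 2 = 0 ∨ x.parity = 0) ∧ (x.parity = 0 ↔ x.weight = 0) ∨
      (x.weight % 2 = 0 ∨ x.parity = 0) ∧ (x.parity = 1 ↔ x.weight = 0) := by omega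
  on_goal 1 => refine .of_split 1 2 ?_
  on_goal 2 => refine .of_shrink ?_
  on_goal 3 => refine .of_split 1 3 ?_
  all_goals
    simp only [IsP, mul_weight, mul_parity, mul_level, heapSignature] at hN ⊢
    omega

lemma hasPOption_five (hlevel : x.level ≤ max x.weight 3) (hN : ¬ (heapSignature 5 * x).IsP) :
    HasPOption 5 x := by
  have := x.parity_lt_two
  have := x.level_le_two_mul_weight
  obtain h | h | h | h : x.parity = 0 ∧ x.weight % 2 = 0 ∨ x.parity = 0 ∧ x.weight % 2 = 1 ∨
      x.parity = 1 ∧ x.weight % 2 = 0 ∨ x.parity = 1 ∧ x.weight % 2 = 1 := by omega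
  on_goal 1 => refine .of_split 2 2 ?_
  on_goal 2 => refine .of_shrink ?_
  on_goal 3 => refine .of_split 1 3 ?_
  on_goal 4 => refine .of_split 1 4 ?_
  all_goals
    simp only [IsP, mul_weight, mul_parity, mul_level, heapSignature] at hN ⊢
    omega

lemma hasPOption_six (hlevel : x.level ≤ max x.weight 3) (hN : ¬ (heapSignature 6 * x).IsP) :
    HasPOption 6 x := by
  have := x.parity_lt_two
  have := x.level_le_two_mul_weight
  obtain h | h | h | h : x.parity = 0 ∨ x.parity = 1 ∧ x.weight % 2 = 1 ∨
      x.parity = 1 ∧ x.weight = 0 ∨ x.parity = 1 ∧ x.weight % 2 = 0 ∧ 0 < x.weight := by omega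
  on_goal 1 => refine .of_split 2 4 ?_
  on_goal 2 => refine .of_split 1 4 ?_
  on_goal 3 => refine .of_split 3 3 ?_
  on_goal 4 => refine .of_shrink ?_
  all_goals
    simp only [IsP, mul_weight, mul_parity, mul_level, heapSignature] at hN ⊢
    omega

lemma HasPOption.exists_move47 {M : ℕ} {R : Multiset ℕ} (h : HasPOption M (positionSignature R)) :
    ∃ G', Move47 (M ::ₘ R) G' ∧ (positionSignature G').IsP := by
  obtain ⟨O, hO, hP⟩ := h
  exact ⟨O + R, hO.move47 R, by rwa [positionSignature_add]⟩

lemma exists_mem_weight_pos {R : Multiset ℕ} (hR : 0 < (positionSignature R).weight) :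
    ∃ k ∈ R, 0 < (heapSignature k).weight := by
  induction R using Multiset.induction with
  | empty => simp at hR
  | cons k R ih =>
    rw [positionSignature_cons, mul_weight] at hR
    simp only [Multiset.mem_cons, exists_eq_or_imp]
    grind

lemma exists_mem_odd {R : Multiset ℕ} (hR : (positionSignature R).parity = 1) :
    ∃ k ∈ R, k % 2 = 1 := by
  induction R using Multiset.induction with
  | empty => simp at hR
  | cons k R ih =>
    rw [positionSignature_cons, mul_parity, heapSignature_parity] at hR
    simp only [Multiset.mem_cons, exists_eq_or_imp]
    grind [(positionSignature R).parity_lt_two]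

-- No option of the largest heap is P here. Since that heap alone keeps the level above the
-- weight, shrinking any other heap of positive weight works.
lemma exists_isP_move47_of_tight {k : ℕ} {R : Multiset ℕ} (hk : 0 < k)
    (hweight : (positionSignature R).weight = k)
    (hparity : (k + (positionSignature R).parity) % 2 = 1) :
    ∃ G', Move47 ((k + 7) ::ₘ R) G' ∧ (positionSignature G').IsP := by
  obtain ⟨g, hg, hg_pos⟩ := exists_mem_weight_pos (hk.trans_eq hweight.symm)
  obtain ⟨R, rfl⟩ := Multiset.exists_cons_of_mem hg
  obtain ⟨j, rfl, hj, hdrop⟩ : ∃ j, g = j + 1 ∧ 1 ≤ j ∧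
      (heapSignature (j + 1)).weight = (heapSignature j).weight + 1 := by
    have := heapSignature_weight_level g
    have := heapSignature_weight_level (g - 1)
    refine ⟨g - 1, by omega, by omega, ?_⟩
    rw [Nat.sub_add_cancel (by omega)]
    omega
  rw [Multiset.cons_swap]
  refine HasPOption.exists_move47 (.of_shrink (.inl ?_))
  have hM : heapSignature (k + 7) =
    { weight := k + 4, parity := (k + 1) % 2, level := 2 * k + 5 } := rfl
  simp only [positionSignature_cons, mul_weight, mul_parity, mul_level, heapSignature_parity,
    hM] at hweight hparity ⊢
  omega

lemma exists_isP_move47_of_forall_le_two {R : Multiset ℕ} (hR : ∀ g ∈ R, g ≤ 2)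
    (hlevel : (positionSignature R).level = (positionSignature R).weight)
    (hweight : (positionSignature R).weight % 2 = 1)
    (hparity : (positionSignature R).parity = 1) :
    ∃ G', Move47 (2 ::ₘ R) G' ∧ (positionSignature G').IsP := by
  obtain ⟨g, hg, hg_odd⟩ := exists_mem_odd hparity
  obtain ⟨R, rfl⟩ := Multiset.exists_cons_of_mem hg
  obtain rfl : g = 1 := by have := hR g hg; omega
  rw [Multiset.cons_swap]
  refine HasPOption.exists_move47 (.of_remove ?_)
  simp only [IsP, positionSignature_cons, mul_weight, mul_parity, mul_level, heapSignature] at *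
  omega

lemma exists_isP_move47_of_forall_le {M : ℕ} {R : Multiset ℕ} (hM : 1 ≤ M)
    (hR : ∀ g ∈ R, g ≤ M) (hN : ¬ (positionSignature (M ::ₘ R)).IsP) :
    ∃ G', Move47 (M ::ₘ R) G' ∧ (positionSignature G').IsP := by
  have hlevel := positionSignature_level_le hR
  have hlevel_of_le_four (hM : M ≤ 4) :
      (positionSignature R).level = (positionSignature R).weight := by
    have := heapSignature_weight_level M
    have := (positionSignature R).weight_le_level
    have := (positionSignature R).level_le_two_mul_weight
    omega
  rw [positionSignature_cons] at hN
  match M, hM with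
  | 1, _ =>
    refine (hasPOption_one ?_ hN).exists_move47
    by_contra h
    obtain ⟨g, hg, hg_pos⟩ := exists_mem_weight_pos (Nat.pos_of_ne_zero h)
    have := heapSignature_weight_level g
    have := hR g hg
    omega
  | 2, _ =>
    have hlevel := hlevel_of_le_four (by norm_num)
    have := (positionSignature R).parity_lt_two
    by_cases h : (positionSignature R).parity = 0 ∨ (positionSignature R).weight % 2 = 0
    · exact (hasPOption_two hlevel h hN).exists_move47
    · exact exists_isP_move47_of_forall_le_two hR hlevel (by omega) (by omega)
  | 3, _ => exact (hasPOption_three (hlevel_of_le_four (by norm_num)) hN).exists_move47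
  | 4, _ => exact (hasPOption_four (hlevel_of_le_four (by norm_num)) hN).exists_move47
  | 5, _ => exact (hasPOption_five hlevel hN).exists_move47
  | 6, _ => exact (hasPOption_six hlevel hN).exists_move47
  | k + 7, _ =>
    rcases lt_or_ge k (positionSignature R).weight with hk | hk
    · exact (hasPOption_add_seven_of_lt_weight hlevel hk hN).exists_move47
    by_cases htight : 0 < k ∧ (positionSignature R).weight = k ∧
        (k + (positionSignature R).parity) % 2 = 1
    · exact exists_isP_move47_of_tight htight.1 htight.2.1 htight.2.2
    · exact (hasPOption_add_seven_of_weight_le hlevel hk hN (by grind)).exists_move47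

lemma exists_isP_move47_of_not_isP {G G' : Multiset ℕ} (h : Move47 G G')
    (hN : ¬ (positionSignature G).IsP) : ∃ G', Move47 G G' ∧ (positionSignature G').IsP := by
  obtain ⟨k, R, O, rfl, hO, -⟩ := move47_iff.1 h
  obtain ⟨M, hM, hmax⟩ := Multiset.exists_max_image id (Multiset.cons_ne_zero (a := k) (m := R))
  have hkM : k ≤ M := hmax k (Multiset.mem_cons_self k R)
  have hk : 1 ≤ k := by cases hO <;> omega
  obtain ⟨S, hS⟩ := Multiset.exists_cons_of_mem hM
  rw [hS] at hN hmax ⊢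
  exact exists_isP_move47_of_forall_le (hk.trans hkM)
    (fun g hg => hmax g (Multiset.mem_cons_of_mem hg)) hN

theorem misereP_iff_isP_positionSignature {PP : Multiset ℕ → Prop}
    (hPP : ∀ G, PP G ↔ (∃ G', Move47 G G') ∧ ∀ G', Move47 G G' → ¬ PP G') (G : Multiset ℕ) :
    PP G ↔ (positionSignature G).IsP :=
  misereP_iff_of_kernel (F := fun G => (positionSignature G).IsP) wellFounded_flip_move47 hPP
    (fun _ => exists_move47_of_isP)
    (fun _ _ => not_isP_positionSignature_of_move47)
    (fun _ _ => exists_isP_move47_of_not_isP) G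

end Octal47

/-- For every position `G` of 4.7 (a finite multiset of positive heap sizes,
including the empty position), `G` is a misère P-position iff `Φ(G) ∈ P`.
Here `PP` is the misère P-position predicate, characterized recursively: a
position is a P-position iff it has at least one option and all options are
N-positions. -/
theorem phi47_correct
    (PP : Multiset ℕ → Prop)
    (hPP : ∀ G : Multiset ℕ,
      PP G ↔ ((∃ G', Move47 G G') ∧ ∀ G', Move47 G G' → ¬ PP G'))
    (G : Multiset ℕ) (hpos : ∀ k ∈ G, 1 ≤ k) :
    PP G ↔ Phi47 G ∈ P47 := by
  rw [Octal47.misereP_iff_isP_positionSignature hPP, Octal47.mem_P47_iff_isP_signature,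
    Octal47.signature_Phi47 hpos]
end

section
/- The bipartite monoid (Q, P) associated to the game 4.7 is reduced: for all x ≠ y in Q there exists z ∈ Q such that exactly one of x·z ∈ P, y·z ∈ P holds. -/
/-!
Put `e_0 = 1`, `e_1 = a c` and `e_(n+2) = a^(n+1) d_n`, and let `δ l = l + min l 2`.  In the
generators `a`, `b`, `e_l` the relations become uniform: `a² = 1`, `e_k e_l = b^(δ k) e_l` for
`k ≤ l`, and `b^m e_l = b^(m + δ l)` as soon as `2 l < m + δ l`.  So every element is of the form
`a^i b^m e_l`; call `i` its parity, `m + δ l` its degree and `l` its level.  Parity mod 2 and degree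
are invariants of `Q`, and so is the level, except that it is forgotten once it is less than half
the degree.

An element of degree `g` and level `l` lies in `P` iff it is odd with `g = 0`, or even with `g` even
and `2 l < g`, or odd with `g` odd and `g ≤ 2 l`.  Distinct elements are then told apart as follows.
* If they differ in parity or in degree mod 2, a large power of `b` makes both levels irrelevant,
  and then `P` reads off parity and degree mod 2.
* If the degrees are `g < g'`, equal mod 2, multiplication by `a^i b^m e_L`, with `L` large and `m`
  chosen to turn `g` into `2 L`, gives both elements level `L`, which is still relevant for the
  first and no longer for the second.
* If the degrees agree and the levels are `k < l`, a power of `b` raises the degree to `2 l`, where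
  `l` is still relevant and `k` no longer is.
-/

/-- Two elements are distinguishable relative to `P` if some multiplier takes exactly one of them
into `P`; a bipartite monoid is reduced when this holds for any two distinct elements. -/
def Distinguishable {M : Type*} [Mul M] (P : Set M) (x y : M) : Prop :=
  ∃ z, Xor (x * z ∈ P) (y * z ∈ P)

theorem Distinguishable.symm {M : Type*} [Mul M] {P : Set M} {x y : M}
    (h : Distinguishable P x y) : Distinguishable P y x :=
  h.imp fun _ hz => Or.symm hz

/-! ### Grades -/

/-- Parity, degree and level of a word.  Under multiplication parities and degrees add, while levels
combine by maximum.  The parity is a natural number that only matters mod 2. -/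
@[ext]
structure Grade where
  parity : ℕ
  degree : ℕ
  level : ℕ

namespace Grade

instance : CommMonoid Grade where
  mul x y := ⟨x.parity + y.parity, x.degree + y.degree, max x.level y.level⟩
  one := ⟨0, 0, 0⟩
  mul_assoc _ _ _ := Grade.ext (add_assoc _ _ _) (add_assoc _ _ _) (max_assoc _ _ _)
  mul_comm _ _ := Grade.ext (add_comm _ _) (add_comm _ _) (max_comm _ _)
  one_mul _ := Grade.ext (zero_add _) (zero_add _) (Nat.zero_max _)
  mul_one _ := Grade.ext (add_zero _) (add_zero _) (Nat.max_zero _)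

theorem one_def : (1 : Grade) = ⟨0, 0, 0⟩ := rfl

theorem mk_mul_mk (p g l p' g' l' : ℕ) :
    (⟨p, g, l⟩ * ⟨p', g', l'⟩ : Grade) = ⟨p + p', g + g', max l l'⟩ := rfl

theorem mk_level_zero_pow (p g n : ℕ) : (⟨p, g, 0⟩ : Grade) ^ n = ⟨n * p, n * g, 0⟩ := by
  induction n with
  | zero => simp [one_def]
  | succ n ih => rw [pow_succ, ih, mk_mul_mk, Nat.succ_mul, Nat.succ_mul, max_self]

/-- The congruence identifying grades that agree up to the parity mod 2 and up to levels less than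
half the degree. -/
def collapse : Con Grade where
  r x y := x.parity % 2 = y.parity % 2 ∧ x.degree = y.degree ∧
    (x.level = y.level ∨ 2 * x.level < x.degree ∧ 2 * y.level < y.degree)
  iseqv := ⟨fun _ => by omega, fun _ => by omega, fun _ _ => by omega⟩
  mul' := by
    rintro ⟨p₁, g₁, l₁⟩ ⟨p₂, g₂, l₂⟩ ⟨p₃, g₃, l₃⟩ ⟨p₄, g₄, l₄⟩ h h'
    simp only [mk_mul_mk] at h h' ⊢
    omega

theorem collapse_mk_mk {p g l p' g' l' : ℕ} :
    collapse ⟨p, g, l⟩ ⟨p', g', l'⟩ ↔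
      p % 2 = p' % 2 ∧ g = g' ∧ (l = l' ∨ 2 * l < g ∧ 2 * l' < g') :=
  Iff.rfl

end Grade

namespace Q47

/-- The grades of the generators, chosen so that `Grade.collapse` identifies the two sides of every
relation in `rel47`. -/
def generatorGrade : Gen47 → Grade
  | .a => ⟨1, 0, 0⟩
  | .b => ⟨0, 1, 0⟩
  | .c => ⟨1, 2, 1⟩
  | .d n => ⟨n + 1, n + 4, n + 2⟩

/-- The grade of a word, the product of the grades of its letters. -/
def wordGrade : FM47 →* Grade where
  toFun u := (u.toAdd.map generatorGrade).prod
  map_one' := by simp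
  map_mul' u v := by simp

theorem wordGrade_fgen47 (x : Gen47) : wordGrade (fgen47 x) = generatorGrade x := by
  change (Multiset.map generatorGrade {x}).prod = generatorGrade x
  rw [Multiset.map_singleton, Multiset.prod_singleton]

theorem wordGrade_fa : wordGrade fa = ⟨1, 0, 0⟩ := wordGrade_fgen47 _
theorem wordGrade_fb : wordGrade fb = ⟨0, 1, 0⟩ := wordGrade_fgen47 _
theorem wordGrade_fc : wordGrade fc = ⟨1, 2, 1⟩ := wordGrade_fgen47 _
theorem wordGrade_fd (n : ℕ) : wordGrade (fd n) = ⟨n + 1, n + 4, n + 2⟩ := wordGrade_fgen47 _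

theorem collapse_wordGrade_of_rel47 {u v : FM47} (h : rel47 u v) :
    Grade.collapse (wordGrade u) (wordGrade v) := by
  rcases h with ⟨rfl, rfl⟩ | ⟨rfl, rfl⟩ | ⟨rfl, rfl⟩ | ⟨n, rfl, rfl⟩ | ⟨n, rfl, rfl⟩ |
    ⟨m, n, hmn, rfl, rfl⟩ <;>
  simp only [map_one, map_mul, map_pow, wordGrade_fa, wordGrade_fb, wordGrade_fc, wordGrade_fd,
    Grade.one_def, pow_two (M := Grade), Grade.mk_level_zero_pow, Grade.mk_mul_mk,
    Grade.collapse_mk_mk, true_and] <;>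
  omega

/-- The quotient map from words to `Q`. -/
def proj : FM47 →* Q47 := (conGen rel47).mk'

/-- The grade of an element of `Q`, well defined only up to `Grade.collapse`. -/
def grade : Q47 →* Grade.collapse.Quotient :=
  (conGen rel47).lift (Grade.collapse.mk'.comp wordGrade) <|
    Con.conGen_le.2 fun _ _ h => (Con.eq _).2 (collapse_wordGrade_of_rel47 h)

theorem grade_proj (u : FM47) : grade (proj u) = Grade.collapse.mk' (wordGrade u) := rfl

/-! ### Normal forms -/

theorem proj_eq_proj_of_rel47 {u v : FM47} (h : rel47 u v) : proj u = proj v :=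
  (Con.eq _).2 (ConGen.Rel.of _ _ h)

theorem proj_fa : proj fa = qa := rfl
theorem proj_fb : proj fb = qb := rfl
theorem proj_fc : proj fc = qc := rfl
theorem proj_fd (n : ℕ) : proj (fd n) = qd n := rfl

theorem qa_sq : qa ^ 2 = 1 :=
  proj_eq_proj_of_rel47 (.inl ⟨rfl, rfl⟩)

theorem qb_mul_qc : qb * qc = qa * qb ^ 3 :=
  proj_eq_proj_of_rel47 (.inr <| .inl ⟨rfl, rfl⟩)

theorem qc_sq : qc ^ 2 = qb ^ 4 :=
  proj_eq_proj_of_rel47 (.inr <| .inr <| .inl ⟨rfl, rfl⟩)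

theorem qb_pow_mul_qd (n : ℕ) : qb ^ (n + 1) * qd n = qa ^ (n + 1) * qb ^ (2 * n + 5) :=
  proj_eq_proj_of_rel47 (.inr <| .inr <| .inr <| .inl ⟨n, rfl, rfl⟩)

theorem qc_mul_qd (n : ℕ) : qc * qd n = qa * qb ^ 2 * qd n :=
  proj_eq_proj_of_rel47 (.inr <| .inr <| .inr <| .inr <| .inl ⟨n, rfl, rfl⟩)

theorem qd_mul_qd {m n : ℕ} (h : m ≤ n) : qd m * qd n = qa ^ (m + 1) * qb ^ (m + 4) * qd n :=
  proj_eq_proj_of_rel47 (.inr <| .inr <| .inr <| .inr <| .inr ⟨m, n, h, rfl, rfl⟩)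

theorem qa_pow_eq_qa_pow {i j : ℕ} (h : i % 2 = j % 2) : qa ^ i = qa ^ j := by
  rw [pow_eq_pow_mod i qa_sq, h, ← pow_eq_pow_mod j qa_sq]

theorem qa_mul_qa : qa * qa = 1 := by rw [← pow_two, qa_sq]

theorem qa_pow_mul_self (i : ℕ) : qa ^ i * qa ^ i = 1 := by
  rw [← mul_pow, qa_mul_qa, one_pow]

/-- The element `e_l` of level `l`: the generators `c` and `d_n`, corrected by powers of `a` so that
their parity is even, and listed by level. -/
def qe : ℕ → Q47
  | 0 => 1
  | 1 => qa * qc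
  | n + 2 => qa ^ (n + 1) * qd n

/-- The degree `δ l` of `e_l`; its values are `0`, `2` and, for `l ≥ 2`, `l + 2`. -/
def levelDegree (l : ℕ) : ℕ := l + min l 2

theorem qb_pow_mul_qe {l m : ℕ} (h : 2 * l < m + levelDegree l) :
    qb ^ m * qe l = qb ^ (m + levelDegree l) := by
  match l with
  | 0 => exact mul_one _
  | 1 =>
    obtain ⟨k, rfl⟩ : ∃ k, m = k + 1 :=
      Nat.exists_eq_add_of_le' (by simp only [levelDegree] at h; omega)
    calc qb ^ (k + 1) * (qa * qc) = qa * qb ^ k * (qb * qc) := by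
          rw [pow_succ]; ac_rfl
      _ = qa * qa * (qb ^ k * qb ^ 3) := by rw [qb_mul_qc]; ac_rfl
      _ = qb ^ (k + 1 + 2) := by rw [qa_mul_qa, one_mul, ← pow_add]
  | n + 2 =>
    obtain ⟨k, rfl⟩ : ∃ k, m = k + (n + 1) :=
      Nat.exists_eq_add_of_le' (by simp only [levelDegree] at h; omega)
    calc qb ^ (k + (n + 1)) * (qa ^ (n + 1) * qd n)
        = qa ^ (n + 1) * qb ^ k * (qb ^ (n + 1) * qd n) := by rw [pow_add]; ac_rfl
      _ = qa ^ (n + 1) * qa ^ (n + 1) * (qb ^ k * qb ^ (2 * n + 5)) := by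
          rw [qb_pow_mul_qd]; ac_rfl
      _ = qb ^ (k + (2 * n + 5)) := by rw [qa_pow_mul_self, one_mul, ← pow_add]
      _ = qb ^ (k + (n + 1) + levelDegree (n + 2)) := by
          congr 1; simp only [levelDegree]; omega

theorem qe_mul_qe {k l : ℕ} (h : k ≤ l) : qe k * qe l = qb ^ levelDegree k * qe l := by
  match k, l with
  | 0, _ => rfl
  | 1, 1 =>
    calc qa * qc * (qa * qc) = qc ^ 2 := by
          rw [mul_mul_mul_comm, qa_mul_qa, one_mul, pow_two]
      _ = qb ^ (2 + levelDegree 1) := qc_sq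
      _ = qb ^ 2 * qe 1 := (qb_pow_mul_qe (by decide)).symm
  | 1, n + 2 =>
    calc qa * qc * (qa ^ (n + 1) * qd n) = qa * qa ^ (n + 1) * (qc * qd n) := by ac_rfl
      _ = qa * qa * (qb ^ 2 * (qa ^ (n + 1) * qd n)) := by rw [qc_mul_qd]; ac_rfl
      _ = qb ^ 2 * (qa ^ (n + 1) * qd n) := by rw [qa_mul_qa, one_mul]
  | m + 2, n + 2 =>
    calc qa ^ (m + 1) * qd m * (qa ^ (n + 1) * qd n)
        = qa ^ (m + 1) * qa ^ (n + 1) * (qd m * qd n) := by ac_rfl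
      _ = qa ^ (m + 1) * qa ^ (m + 1) * (qb ^ (m + 4) * (qa ^ (n + 1) * qd n)) := by
          rw [qd_mul_qd (by omega)]; ac_rfl
      _ = qb ^ levelDegree (m + 2) * qe (n + 2) := by
          rw [qa_pow_mul_self, one_mul]; simp [levelDegree, qe]

theorem qe_mul_qe_eq_min_max (k l : ℕ) :
    qe k * qe l = qb ^ levelDegree (min k l) * qe (max k l) := by
  rcases le_total k l with h | h
  · rw [min_eq_left h, max_eq_right h, qe_mul_qe h]
  · rw [min_eq_right h, max_eq_left h, mul_comm, qe_mul_qe h]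

/-- The element `a^i b^m e_l`, of parity `i`, degree `m + levelDegree l` and level `l`. -/
def normalForm (i m l : ℕ) : Q47 := qa ^ i * qb ^ m * qe l

theorem normalForm_mul_normalForm (i m k j n l : ℕ) :
    normalForm i m k * normalForm j n l =
      normalForm (i + j) (m + n + levelDegree (min k l)) (max k l) := by
  calc qa ^ i * qb ^ m * qe k * (qa ^ j * qb ^ n * qe l)
      = qa ^ i * qa ^ j * (qb ^ m * qb ^ n) * (qe k * qe l) := by ac_rfl
    _ = qa ^ (i + j) * qb ^ (m + n + levelDegree (min k l)) * qe (max k l) := by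
      rw [qe_mul_qe_eq_min_max]; simp only [pow_add, mul_assoc]

theorem qa_eq_normalForm : qa = normalForm 1 0 0 := by simp [normalForm, qe]

theorem qb_pow_eq_normalForm (m : ℕ) : qb ^ m = normalForm 0 m 0 := by simp [normalForm, qe]

theorem qc_eq_normalForm : qc = normalForm 1 0 1 := by
  simp [normalForm, qe, ← mul_assoc, qa_mul_qa]

theorem qd_eq_normalForm (n : ℕ) : qd n = normalForm (n + 1) 0 (n + 2) := by
  simp [normalForm, qe, ← mul_assoc, qa_pow_mul_self]

theorem exists_proj_fgen47_eq_normalForm (s : Gen47) :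
    ∃ i m l, proj (fgen47 s) = normalForm i m l := by
  cases s with
  | a => exact ⟨_, _, _, qa_eq_normalForm⟩
  | b => exact ⟨_, _, _, (pow_one qb).symm.trans (qb_pow_eq_normalForm 1)⟩
  | c => exact ⟨_, _, _, qc_eq_normalForm⟩
  | d n => exact ⟨_, _, _, qd_eq_normalForm n⟩

theorem exists_eq_normalForm (x : Q47) : ∃ i m l, x = normalForm i m l := by
  obtain ⟨u, rfl⟩ : ∃ u, proj u = x := (conGen rel47).mk'_surjective x
  induction u using Multiset.induction_on with
  | empty => exact ⟨_, _, _, (pow_zero qb).symm.trans (qb_pow_eq_normalForm 0)⟩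
  | cons s u ih =>
    obtain ⟨i, m, k, hs⟩ := exists_proj_fgen47_eq_normalForm s
    obtain ⟨j, n, l, hu⟩ := ih
    have hmul : proj (s ::ₘ u) = proj (fgen47 s) * proj u := map_mul proj (fgen47 s) u
    exact ⟨_, _, _, by rw [hmul, hs, hu, normalForm_mul_normalForm]⟩

theorem grade_qa_pow (i : ℕ) : grade (qa ^ i) = Grade.collapse.mk' ⟨i, 0, 0⟩ := by
  rw [map_pow, ← proj_fa, grade_proj, wordGrade_fa, ← map_pow, Grade.mk_level_zero_pow, mul_one,
    mul_zero]

theorem grade_qb_pow (m : ℕ) : grade (qb ^ m) = Grade.collapse.mk' ⟨0, m, 0⟩ := by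
  rw [map_pow, ← proj_fb, grade_proj, wordGrade_fb, ← map_pow, Grade.mk_level_zero_pow, mul_one,
    mul_zero]

theorem grade_qe (l : ℕ) : grade (qe l) = Grade.collapse.mk' ⟨0, levelDegree l, l⟩ := by
  match l with
  | 0 => rfl
  | 1 =>
    rw [qe, ← pow_one qa, map_mul, grade_qa_pow, ← proj_fc, grade_proj, wordGrade_fc, ← map_mul]
    exact (Con.eq _).2 ⟨rfl, rfl, Or.inl rfl⟩
  | n + 2 =>
    rw [qe, map_mul, grade_qa_pow, ← proj_fd, grade_proj, wordGrade_fd, ← map_mul]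
    refine (Con.eq _).2 ?_
    rw [Grade.mk_mul_mk, Grade.collapse_mk_mk, levelDegree]
    omega

theorem grade_normalForm (i m l : ℕ) :
    grade (normalForm i m l) = Grade.collapse.mk' ⟨i, m + levelDegree l, l⟩ := by
  rw [normalForm, map_mul, map_mul, grade_qa_pow, grade_qb_pow, grade_qe, ← map_mul, ← map_mul,
    Grade.mk_mul_mk, Grade.mk_mul_mk, zero_add, add_zero, add_zero, max_self, Nat.zero_max]

theorem normalForm_eq_normalForm_of_lt {i j m n k l : ℕ} (hparity : i % 2 = j % 2)
    (hdegree : m + levelDegree k = n + levelDegree l) (hk : 2 * k < m + levelDegree k)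
    (hl : 2 * l < n + levelDegree l) : normalForm i m k = normalForm j n l := by
  rw [normalForm, normalForm, mul_assoc, mul_assoc, qb_pow_mul_qe hk, qb_pow_mul_qe hl, hdegree,
    qa_pow_eq_qa_pow hparity]

theorem normalForm_eq_normalForm_iff {i m k j n l : ℕ} :
    normalForm i m k = normalForm j n l ↔
      i % 2 = j % 2 ∧ m + levelDegree k = n + levelDegree l ∧
        (k = l ∨ 2 * k < m + levelDegree k ∧ 2 * l < n + levelDegree l) := by
  constructor
  · intro h
    have hgrade := congrArg grade h
    rw [grade_normalForm, grade_normalForm] at hgrade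
    exact Grade.collapse_mk_mk.1 ((Con.eq _).1 hgrade)
  · rintro ⟨hparity, hdegree, rfl | ⟨hk, hl⟩⟩
    · rw [normalForm, normalForm, qa_pow_eq_qa_pow hparity, Nat.add_right_cancel hdegree]
    · exact normalForm_eq_normalForm_of_lt hparity hdegree hk hl

/-! ### The set `P` and separation -/

theorem qb_pow_mul_qd_eq_normalForm (m : ℕ) {n : ℕ} (hn : n % 2 = 0) :
    qb ^ m * qd n = normalForm 1 m (n + 2) := by
  rw [qb_pow_eq_normalForm, qd_eq_normalForm, normalForm_mul_normalForm,
    normalForm_eq_normalForm_iff]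
  simp only [levelDegree]
  omega

theorem qa_mul_qb_pow_mul_qd_eq_normalForm (m : ℕ) {n : ℕ} (hn : n % 2 = 1) :
    qa * qb ^ m * qd n = normalForm 1 m (n + 2) := by
  rw [qa_eq_normalForm, qb_pow_eq_normalForm, qd_eq_normalForm, normalForm_mul_normalForm,
    normalForm_mul_normalForm, normalForm_eq_normalForm_iff]
  simp only [levelDegree]
  omega

theorem mem_P47_iff {x : Q47} :
    x ∈ P47 ↔ x = normalForm 1 0 0 ∨ (∃ m, 1 ≤ m ∧ x = normalForm 0 (2 * m) 0) ∨
      ∃ m n, m < n ∧ (m + n) % 2 = 1 ∧ x = normalForm 1 m (n + 2) := by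
  constructor
  · rintro (((rfl | ⟨m, hm, rfl⟩) | ⟨m, n, hm, hn, hmn, rfl⟩) | ⟨m, n, hm, hn, hmn, rfl⟩)
    · exact Or.inl qa_eq_normalForm
    · exact Or.inr (Or.inl ⟨m, hm, qb_pow_eq_normalForm _⟩)
    · exact Or.inr (Or.inr ⟨m, n, hmn, by omega, qb_pow_mul_qd_eq_normalForm m hn⟩)
    · exact Or.inr (Or.inr ⟨m, n, hmn, by omega, qa_mul_qb_pow_mul_qd_eq_normalForm m hn⟩)
  · rintro (rfl | ⟨m, hm, rfl⟩ | ⟨m, n, hmn, hmod, rfl⟩)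
    · exact Or.inl (Or.inl (Or.inl qa_eq_normalForm.symm))
    · exact Or.inl (Or.inl (Or.inr ⟨m, hm, (qb_pow_eq_normalForm _).symm⟩))
    · rcases Nat.mod_two_eq_zero_or_one n with hn | hn
      · exact Or.inl (Or.inr ⟨m, n, by omega, hn, hmn, (qb_pow_mul_qd_eq_normalForm m hn).symm⟩)
      · exact Or.inr ⟨m, n, by omega, hn, hmn, (qa_mul_qb_pow_mul_qd_eq_normalForm m hn).symm⟩

theorem normalForm_mem_P47_iff {i m l : ℕ} :
    normalForm i m l ∈ P47 ↔
      i % 2 = 1 ∧ m + levelDegree l = 0 ∨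
      i % 2 = 0 ∧ (m + levelDegree l) % 2 = 0 ∧ 2 * l < m + levelDegree l ∨
      i % 2 = 1 ∧ (m + levelDegree l) % 2 = 1 ∧ m + levelDegree l ≤ 2 * l := by
  simp only [mem_P47_iff, normalForm_eq_normalForm_iff, levelDegree]
  constructor
  · rintro (h | ⟨m', h⟩ | ⟨m', n, h⟩) <;> omega
  · rintro (h | h | h)
    · left
      omega
    · exact Or.inr (Or.inl ⟨(m + (l + min l 2)) / 2, by omega⟩)
    · exact Or.inr (Or.inr ⟨m, l - 2, by omega⟩)

theorem distinguishable_of_mod_two_ne {i m k j n l : ℕ}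
    (h : i % 2 ≠ j % 2 ∨ (m + levelDegree k) % 2 ≠ (n + levelDegree l) % 2) :
    Distinguishable P47 (normalForm i m k) (normalForm j n l) := by
  refine ⟨normalForm i (m + levelDegree k + 2 * (k + l + 1)) 0, Or.inl ?_⟩
  simp only [normalForm_mul_normalForm, normalForm_mem_P47_iff]
  simp only [levelDegree] at h ⊢
  omega

theorem distinguishable_of_degree_lt {i m k j n l : ℕ}
    (hlt : m + levelDegree k < n + levelDegree l)
    (hmod : (m + levelDegree k) % 2 = (n + levelDegree l) % 2) :
    Distinguishable P47 (normalForm i m k) (normalForm j n l) := by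
  -- `L` is so large that the subtractions do not truncate: the first product has degree `2 * L`.
  obtain ⟨L, hL⟩ : ∃ L, m + levelDegree k + k + l + 2 ≤ L := ⟨_, le_rfl⟩
  refine ⟨normalForm j (2 * L - levelDegree L - (m + levelDegree k)) L, Or.inr ?_⟩
  simp only [normalForm_mul_normalForm, normalForm_mem_P47_iff]
  simp only [levelDegree] at hlt hmod hL ⊢
  omega

theorem distinguishable_of_level_lt {i m k j n l : ℕ}
    (hdegree : m + levelDegree k = n + levelDegree l) (hlt : k < l)
    (hle : n + levelDegree l ≤ 2 * l) :
    Distinguishable P47 (normalForm i m k) (normalForm j n l) := by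
  refine ⟨normalForm i (2 * l - (n + levelDegree l)) 0, Or.inl ?_⟩
  simp only [normalForm_mul_normalForm, normalForm_mem_P47_iff]
  simp only [levelDegree] at hdegree hle ⊢
  omega

end Q47

/-- The bipartite monoid `(Q, P)` for 4.7 is reduced: any two distinct
elements are distinguished by multiplication into `P`. -/
theorem Q47_reduced :
    ∀ x y : Q47, x ≠ y → ∃ z : Q47, Xor' (x * z ∈ P47) (y * z ∈ P47) := by
  intro x y hxy
  obtain ⟨i, m, k, rfl⟩ := Q47.exists_eq_normalForm x
  obtain ⟨j, n, l, rfl⟩ := Q47.exists_eq_normalForm y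
  rw [Ne, Q47.normalForm_eq_normalForm_iff] at hxy
  by_cases hmod : i % 2 = j % 2 ∧ (m + Q47.levelDegree k) % 2 = (n + Q47.levelDegree l) % 2
  · rcases lt_trichotomy (m + Q47.levelDegree k) (n + Q47.levelDegree l) with hlt | heq | hgt
    · exact Q47.distinguishable_of_degree_lt hlt hmod.2
    · rcases lt_or_gt_of_ne (show k ≠ l by omega) with hlt | hgt
      · exact Q47.distinguishable_of_level_lt heq hlt (by omega)
      · exact (Q47.distinguishable_of_level_lt heq.symm hgt (by omega)).symm
    · exact (Q47.distinguishable_of_degree_lt hgt hmod.2.symm).symm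
  · exact Q47.distinguishable_of_mod_two_ne (by omega)
end

section
/- In the monoid Q associated to the game 4.7, for all heap sizes k ≤ k' one has Φ(H_k)·Φ(H_{k'}) = a^{g(H_k)} · b^{t(H_k)} · Φ(H_{k'}), where g(H_k) = 2 if k is even and g(H_k) = 1 if k is odd. -/
/-- The function `t` on single heaps for 4.7. -/
def t47 (k : ℕ) : ℕ :=
  if k = 1 then 0 else if k = 2 then 1 else k - 3

/-!
On the value of every heap of size at least `5`, `c` acts as multiplication by `a b²`; on the value
of every heap of size at least `m + 7`, `d_m` acts as multiplication by `a^(m+1) b^(m+4)`. Since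
`a² = 1`, exponents of `a` matter only modulo `2`, so both cases say that `Φ(H_k)` acts as
`a^k b^(t(H_k))` on the values of heaps of size at least `k`. For `k ∈ {1, 2, 3, 4, 6}` the two
elements are even equal.
-/

theorem pow_eq_pow_ite_even_of_sq_eq_one {M : Type*} [Monoid M] {x : M} (hx : x ^ 2 = 1) (k : ℕ) :
    x ^ k = x ^ (if k % 2 = 0 then 2 else 1) :=
  pow_eq_pow_of_modEq (by unfold Nat.ModEq; split_ifs <;> omega) hx

theorem mk_eq_mk_of_rel47 {x y : FM47} (h : rel47 x y) :
    (conGen rel47).mk' x = (conGen rel47).mk' y :=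
  (Con.eq _).2 (ConGen.Rel.of _ _ h)

theorem qa_sq : qa ^ 2 = 1 :=
  mk_eq_mk_of_rel47 (.inl ⟨rfl, rfl⟩)

theorem qb_mul_qc : qb * qc = qa * qb ^ 3 :=
  mk_eq_mk_of_rel47 (.inr <| .inl ⟨rfl, rfl⟩)

theorem qc_sq : qc ^ 2 = qb ^ 4 :=
  mk_eq_mk_of_rel47 (.inr <| .inr <| .inl ⟨rfl, rfl⟩)

theorem qc_mul_qd (n : ℕ) : qc * qd n = qa * qb ^ 2 * qd n :=
  mk_eq_mk_of_rel47 (.inr <| .inr <| .inr <| .inr <| .inl ⟨n, rfl, rfl⟩)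

theorem qd_mul_qd {m n : ℕ} (hmn : m ≤ n) :
    qd m * qd n = qa ^ (m + 1) * qb ^ (m + 4) * qd n :=
  mk_eq_mk_of_rel47 (.inr <| .inr <| .inr <| .inr <| .inr ⟨m, n, hmn, rfl, rfl⟩)

theorem qc_mul_qc : qc * qc = qa * qb ^ 2 * qc :=
  calc
    qc * qc = qa ^ 2 * qb ^ 4 := by rw [← sq, qc_sq, qa_sq, one_mul]
    _ = qa * qb * (qa * qb ^ 3) := by rw [mul_mul_mul_comm, ← sq, ← pow_succ']
    _ = qa * qb * (qb * qc) := by rw [qb_mul_qc]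
    _ = qa * qb ^ 2 * qc := by rw [sq qb, ← mul_assoc, mul_assoc qa]

theorem qc_mul_qb_pow_succ (n : ℕ) : qc * qb ^ (n + 1) = qa * qb ^ 2 * qb ^ (n + 1) :=
  calc
    qc * qb ^ (n + 1) = qb * qc * qb ^ n := by rw [pow_succ', ← mul_assoc, mul_comm qc]
    _ = qa * qb ^ 3 * qb ^ n := by rw [qb_mul_qc]
    _ = qa * qb ^ 2 * qb ^ (n + 1) := by rw [pow_succ qb 2, pow_succ' qb n]; simp only [mul_assoc]

theorem phi47_five : phi47 5 = qc := by simp [phi47]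

theorem phi47_six : phi47 6 = qb ^ 3 := by simp [phi47]

theorem phi47_add_seven (m : ℕ) : phi47 (m + 7) = qd m := by simp [phi47]

theorem t47_of_three_le {k : ℕ} (hk : 3 ≤ k) : t47 k = k - 3 := by
  rw [t47, if_neg (by omega), if_neg (by omega)]

theorem qc_mul_phi47 {k : ℕ} (hk : 5 ≤ k) : qc * phi47 k = qa * qb ^ 2 * phi47 k := by
  obtain rfl | rfl | hk7 : k = 5 ∨ k = 6 ∨ 7 ≤ k := by omega
  · rw [phi47_five, qc_mul_qc]
  · rw [phi47_six, qc_mul_qb_pow_succ]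
  · obtain ⟨n, rfl⟩ := Nat.exists_eq_add_of_le' hk7
    rw [phi47_add_seven, qc_mul_qd]

theorem phi47_eq_qa_pow_mul_qb_pow {k : ℕ} (hk : k ∈ ({1, 2, 3, 4, 6} : Set ℕ)) :
    phi47 k = qa ^ k * qb ^ t47 k := by
  rw [pow_eq_pow_ite_even_of_sq_eq_one qa_sq k]
  obtain rfl | rfl | rfl | rfl | rfl := hk <;> simp [phi47, t47, qa_sq]

theorem phi47_five_mul_phi47 {k : ℕ} (hk : 5 ≤ k) :
    phi47 5 * phi47 k = qa ^ 5 * qb ^ t47 5 * phi47 k := by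
  have qa_pow_five : qa ^ 5 = qa := by
    rw [pow_eq_pow_ite_even_of_sq_eq_one qa_sq 5, if_neg (by decide), pow_one]
  rw [phi47_five, qc_mul_phi47 hk, qa_pow_five, t47_of_three_le (by decide)]

theorem phi47_mul_phi47_of_seven_le {k k' : ℕ} (hk : 7 ≤ k) (hkk' : k ≤ k') :
    phi47 k * phi47 k' = qa ^ k * qb ^ t47 k * phi47 k' := by
  obtain ⟨m, rfl⟩ := Nat.exists_eq_add_of_le' hk
  obtain ⟨n, rfl⟩ := Nat.exists_eq_add_of_le' (hk.trans hkk')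
  have qa_pow_add_seven : qa ^ (m + 7) = qa ^ (m + 1) :=
    pow_eq_pow_of_modEq (by unfold Nat.ModEq; omega) qa_sq
  have t47_add_seven : t47 (m + 7) = m + 4 := t47_of_three_le (by omega)
  rw [phi47_add_seven, phi47_add_seven, qd_mul_qd (by omega), qa_pow_add_seven, t47_add_seven]

/-- For heap sizes `1 ≤ k ≤ k'`, one has
`Φ(H_k) Φ(H_k') = a^(g(H_k)) b^(t(H_k)) Φ(H_k')`, where `g(H_k)` is 2 if `k`
is even and 1 if `k` is odd. -/
theorem phi47_two_heaps :
    ∀ k k' : ℕ, 1 ≤ k → k ≤ k' →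
      phi47 k * phi47 k' =
        qa ^ (if k % 2 = 0 then 2 else 1) * qb ^ t47 k * phi47 k' := by
  intro k k' hk hkk'
  rw [← pow_eq_pow_ite_even_of_sq_eq_one qa_sq k]
  obtain hsmall | rfl | hk7 : k ∈ ({1, 2, 3, 4, 6} : Set ℕ) ∨ k = 5 ∨ 7 ≤ k := by
    simp only [Set.mem_insert_iff, Set.mem_singleton_iff]
    omega
  · rw [phi47_eq_qa_pow_mul_qb_pow hsmall]
  · exact phi47_five_mul_phi47 hkk'
  · exact phi47_mul_phi47_of_seven_le hk7 hkk'
end
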